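/- arXiv:2410.00554 — 2 statements merged into one kernel-verified Lean document; each statement's English description precedes it below -/
import Mathlib

section
/- Let d ≥ 2, k ≥ 2, 1 ≤ t ≤ k, let S_k be the cyclic-shift unitary on (ℂ^d)^{⊗k} with S_k(v_1 ⊗ ⋯ ⊗ v_k) = v_k ⊗ v_1 ⊗ ⋯ ⊗ v_{k-1}, and D_k = (I + S_k)/2. Let Ω and σ be Hermitian d×d matrices with Ωσ = σΩ and tr(σ) = 1. Then tr[(Ω^{⊗t} ⊗ I^{⊗(k−t)}) · D_k σ^{⊗k} D_k†] = (1/2)·(tr(Ωσ))^t + (1/2)·tr((Ωσ)^t σ^{k−t}). -/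
open Matrix Kronecker BigOperators

noncomputable section

/-- The cyclically previous index: `m - 1 (mod k)`. -/
def prevIdx {k : ℕ} (m : Fin k) : Fin k :=
  ⟨(m.val + (k - 1)) % k, Nat.mod_lt _ m.pos⟩

/-- The cyclic-shift unitary `S_k` on `(ℂ^d)^{⊗k}`, determined by
`S_k (v_1 ⊗ ⋯ ⊗ v_k) = v_k ⊗ v_1 ⊗ ⋯ ⊗ v_{k-1}`, written as a matrix in the
standard tensor-product basis indexed by functions `Fin k → Fin d`. -/
def cyc (d k : ℕ) : Matrix (Fin k → Fin d) (Fin k → Fin d) ℂ :=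
  fun g f => if g = fun m => f (prevIdx m) then 1 else 0

/-- The SWAP projection `D_k = (I + S_k)/2`. -/
def Dk (d k : ℕ) : Matrix (Fin k → Fin d) (Fin k → Fin d) ℂ :=
  (1 / 2 : ℂ) • (1 + cyc d k)

/-- The tensor product `A_1 ⊗ A_2 ⊗ ⋯ ⊗ A_k` of `d × d` matrices, acting
factor-wise on `(ℂ^d)^{⊗k}`. -/
def tensOp {d k : ℕ} (A : Fin k → Matrix (Fin d) (Fin d) ℂ) :
    Matrix (Fin k → Fin d) (Fin k → Fin d) ℂ :=
  fun g f => ∏ m, A m (g m) (f m)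

/-- The tensor product `v_1 ⊗ ⋯ ⊗ v_k` of vectors in `ℂ^d`. -/
def tensVec {d k : ℕ} (v : Fin k → (Fin d → ℂ)) : (Fin k → Fin d) → ℂ :=
  fun f => ∏ m, v m (f m)

/-- The partial trace over the last `k - 1` tensor factors, mapping matrices on
`(ℂ^d)^{⊗k}` to `d × d` matrices by tracing out factors `2` through `k`. -/
def ptraceFirst {d k : ℕ} (M : Matrix (Fin k → Fin d) (Fin k → Fin d) ℂ) :
    Matrix (Fin d) (Fin d) ℂ :=
  fun a b => ∑ r : {i : Fin k // i.val ≠ 0} → Fin d,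
    M (fun m => if h : m.val = 0 then a else r ⟨m, h⟩)
      (fun m => if h : m.val = 0 then b else r ⟨m, h⟩)

/-!
Since `σ^{⊗k}` commutes with the unitary `S_k`, the operator `D_k σ^{⊗k} D_k†` equals
`σ^{⊗k} D_k D_k† = σ^{⊗k} (1/2 + (S_k + S_k†)/4)`. The identity term contributes a product of
traces. Against `A_1 ⊗ ⋯ ⊗ A_k`, the permutation matrices `S_k†` and `S_k` glue the factors into a
single cycle, which contributes `tr(A_1 ⋯ A_k)` and `tr(A_k ⋯ A_1)`. When the first `t` factors are
`Ωσ` and the others `σ`, both words are, up to cyclic rotation, `(Ωσ)^t σ^{k-t}`.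
-/

section CyclicTrace

variable {n R : Type*} [Fintype n] [DecidableEq n] [CommSemiring R]

lemma prod_ofFn_apply {k : ℕ} (B : Fin (k + 1) → Matrix n n R) (i j : n) :
    (List.ofFn B).prod i j =
      ∑ f : Fin k → n, ∏ m, B m (Fin.cons (α := fun _ => n) i f m)
        (Fin.snoc (α := fun _ => n) f j m) := by
  induction k generalizing i with
  | zero => simp [Fin.snoc]
  | succ k ih =>
    rw [List.ofFn_succ, List.prod_cons, Matrix.mul_apply,
      ← (Fin.consEquiv fun _ : Fin (k + 1) => n).sum_comp, Fintype.sum_prod_type]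
    refine Finset.sum_congr rfl fun c _ => ?_
    rw [ih, Finset.mul_sum]
    refine Finset.sum_congr rfl fun f _ => ?_
    have hcons : (Fin.consEquiv fun _ : Fin (k + 1) => n) (c, f) = Fin.cons c f := rfl
    rw [hcons, ← Fin.cons_snoc_eq_snoc_cons, Fin.prod_univ_succ (n := k + 1)]
    simp only [Fin.cons_zero, Fin.cons_succ]

lemma trace_prod_ofFn {k : ℕ} [NeZero k] (B : Fin k → Matrix n n R) :
    (List.ofFn B).prod.trace = ∑ f : Fin k → n, ∏ m, B m (f m) (f (finRotate k m)) := by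
  obtain ⟨k, rfl⟩ := Nat.exists_eq_succ_of_ne_zero (NeZero.ne k)
  rw [← (Fin.consEquiv fun _ : Fin (k + 1) => n).sum_comp, Fintype.sum_prod_type]
  refine Finset.sum_congr rfl fun i _ => ?_
  simp only [Matrix.diag_apply, prod_ofFn_apply, Fin.snoc_eq_cons_rotate, Fin.consEquiv_apply]

end CyclicTrace

lemma ofFn_ite_val_lt {α : Type*} {k t : ℕ} (ht : t ≤ k) (a b : α) :
    List.ofFn (fun m : Fin k => if m.val < t then a else b) =
      List.replicate t a ++ List.replicate (k - t) b := by
  apply List.ext_getElem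
  · simp [ht]
  · intro m _ _
    simp [List.getElem_append]

section TensorOperators

variable {d k : ℕ}

lemma tensOp_mul (A B : Fin k → Matrix (Fin d) (Fin d) ℂ) :
    tensOp A * tensOp B = tensOp fun m => A m * B m := by
  ext g f
  simp only [tensOp, Matrix.mul_apply, ← Finset.prod_mul_distrib, Fintype.prod_sum]

lemma trace_tensOp (A : Fin k → Matrix (Fin d) (Fin d) ℂ) :
    (tensOp A).trace = ∏ m, (A m).trace := by
  simp only [tensOp, Matrix.trace, Matrix.diag_apply, Fintype.prod_sum]

lemma transpose_tensOp (A : Fin k → Matrix (Fin d) (Fin d) ℂ) :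
    (tensOp A)ᵀ = tensOp fun m => (A m)ᵀ :=
  rfl

end TensorOperators

section CyclicShift

lemma prevIdx_eq_finRotate_symm {k : ℕ} (m : Fin k) : prevIdx m = (finRotate k).symm m := by
  have : NeZero k := ⟨m.pos.ne'⟩
  have hpred : m.val + (k - 1) + 1 = m.val + k := by have := m.pos; omega
  rw [Equiv.eq_symm_apply, finRotate_apply]
  ext
  rw [Fin.val_add, Fin.val_one', prevIdx, Nat.add_mod_mod, Nat.mod_add_mod, hpred,
    Nat.add_mod_right, Nat.mod_eq_of_lt m.isLt]

/-- The action `f ↦ f ∘ finRotate k` of the cyclic shift on basis indices, through which `cyc d k`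
becomes a permutation matrix. Since row `g` of `σ.permMatrix` has its `1` in column `σ g`, this is
the inverse of the map `f ↦ f ∘ prevIdx` by which `cyc d k` moves basis vectors. -/
def shiftPerm (d k : ℕ) : Equiv.Perm (Fin k → Fin d) :=
  (finRotate k).symm.arrowCongr (Equiv.refl (Fin d))

variable {d k : ℕ}

lemma shiftPerm_apply (f : Fin k → Fin d) (m : Fin k) : shiftPerm d k f m = f (finRotate k m) :=
  rfl

lemma shiftPerm_symm_apply (f : Fin k → Fin d) (m : Fin k) :
    (shiftPerm d k).symm f m = f (prevIdx m) := by
  rw [prevIdx_eq_finRotate_symm]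
  rfl

lemma cyc_eq_permMatrix : cyc d k = (shiftPerm d k).permMatrix ℂ := by
  ext g f
  have h : (g = fun m => f (prevIdx m)) ↔ shiftPerm d k g = f := by
    simp only [← shiftPerm_symm_apply, Equiv.eq_symm_apply]
  simp only [cyc, h, PEquiv.toMatrix_apply, Equiv.toPEquiv_apply, Option.mem_some_iff]

lemma conjTranspose_cyc_eq_transpose : (cyc d k)ᴴ = (cyc d k)ᵀ := by
  simp only [cyc_eq_permMatrix, Matrix.conjTranspose_permMatrix, Matrix.transpose_permMatrix]

lemma cyc_mul_conjTranspose : cyc d k * (cyc d k)ᴴ = 1 := by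
  rw [cyc_eq_permMatrix, Matrix.conjTranspose_permMatrix, ← Matrix.permMatrix_mul,
    inv_mul_cancel, Matrix.permMatrix_one]

lemma cyc_mul_tensOp (A : Fin k → Matrix (Fin d) (Fin d) ℂ) :
    cyc d k * tensOp A = tensOp (fun m => A (prevIdx m)) * cyc d k := by
  rw [cyc_eq_permMatrix, PEquiv.toMatrix_toPEquiv_mul, PEquiv.mul_toMatrix_toPEquiv]
  ext g f
  simp only [Matrix.submatrix_apply, tensOp, id, shiftPerm_symm_apply]
  refine Fintype.prod_equiv (finRotate k) _ _ fun m => ?_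
  simp only [shiftPerm_apply, prevIdx_eq_finRotate_symm, Equiv.symm_apply_apply]

lemma trace_tensOp_mul_conjTranspose_cyc [NeZero k] (A : Fin k → Matrix (Fin d) (Fin d) ℂ) :
    (tensOp A * (cyc d k)ᴴ).trace = (List.ofFn A).prod.trace := by
  rw [cyc_eq_permMatrix, Matrix.conjTranspose_permMatrix, PEquiv.mul_toMatrix_toPEquiv,
    trace_prod_ofFn]
  rfl

lemma trace_tensOp_mul_cyc [NeZero k] (A : Fin k → Matrix (Fin d) (Fin d) ℂ) :
    (tensOp A * cyc d k).trace = (List.ofFn A).reverse.prod.trace := by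
  rw [← Matrix.trace_transpose, Matrix.transpose_mul, transpose_tensOp, Matrix.trace_mul_comm,
    ← conjTranspose_cyc_eq_transpose, trace_tensOp_mul_conjTranspose_cyc,
    ← Matrix.trace_transpose (List.prod _), Matrix.transpose_list_prod, List.map_ofFn]
  rfl

end CyclicShift

section SwapProjection

variable {d k : ℕ}

lemma Dk_mul_tensOp_const (σ : Matrix (Fin d) (Fin d) ℂ) :
    Dk d k * tensOp (fun _ => σ) = tensOp (fun _ => σ) * Dk d k := by
  simp only [Dk, smul_mul_assoc, mul_smul_comm, add_mul, mul_add, one_mul, mul_one, cyc_mul_tensOp]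

lemma Dk_mul_conjTranspose :
    Dk d k * (Dk d k)ᴴ = (1 / 2 : ℂ) • 1 + (1 / 4 : ℂ) • (cyc d k + (cyc d k)ᴴ) := by
  have hstar : star (1 / 2 : ℂ) = 1 / 2 := by simp
  simp only [Dk, Matrix.conjTranspose_smul, Matrix.conjTranspose_add, Matrix.conjTranspose_one,
    hstar, smul_mul_smul_comm, add_mul, mul_add, one_mul, mul_one, cyc_mul_conjTranspose]
  module

lemma trace_tensOp_mul_Dk_conj [NeZero k] (A : Fin k → Matrix (Fin d) (Fin d) ℂ)
    (σ : Matrix (Fin d) (Fin d) ℂ) :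
    (tensOp A * (Dk d k * tensOp (fun _ => σ) * (Dk d k)ᴴ)).trace =
      (1 / 2 : ℂ) * ∏ m, (A m * σ).trace +
        (1 / 4 : ℂ) * ((List.ofFn fun m => A m * σ).reverse.prod.trace +
          (List.ofFn fun m => A m * σ).prod.trace) := by
  rw [Dk_mul_tensOp_const, mul_assoc, ← mul_assoc, tensOp_mul, Dk_mul_conjTranspose]
  simp only [mul_add, mul_smul_comm, mul_one, Matrix.trace_add, Matrix.trace_smul, smul_eq_mul,
    trace_tensOp, trace_tensOp_mul_cyc, trace_tensOp_mul_conjTranspose_cyc]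

end SwapProjection

theorem stmt7_general {d k t : ℕ} (hk : k ≠ 0) (ht : t ≤ k) (Ω σ : Matrix (Fin d) (Fin d) ℂ) :
    (tensOp (fun m : Fin k => if m.val < t then Ω else 1)
        * (Dk d k * tensOp (fun _ : Fin k => σ) * (Dk d k)ᴴ)).trace
      = (1 / 2 : ℂ) * ((Ω * σ).trace ^ t * σ.trace ^ (k - t))
        + (1 / 2 : ℂ) * ((Ω * σ) ^ t * σ ^ (k - t)).trace := by
  have : NeZero k := ⟨hk⟩
  have hprod : ∏ m : Fin k, (if m.val < t then (Ω * σ).trace else σ.trace) =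
      (Ω * σ).trace ^ t * σ.trace ^ (k - t) := by
    rw [← List.prod_ofFn, ofFn_ite_val_lt ht, List.prod_append, List.prod_replicate,
      List.prod_replicate]
  rw [trace_tensOp_mul_Dk_conj]
  simp only [ite_mul, one_mul, apply_ite Matrix.trace, hprod, ofFn_ite_val_lt ht,
    List.reverse_append, List.reverse_replicate, List.prod_append, List.prod_replicate,
    Matrix.trace_mul_comm (σ ^ (k - t))]
  ring

/-- For commuting Hermitian `Ω`, `σ` with `tr σ = 1`,
`tr[(Ω^{⊗t} ⊗ I^{⊗(k−t)}) · D_k σ^{⊗k} D_k†]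
  = (1/2)(tr(Ωσ))^t + (1/2) tr((Ωσ)^t σ^{k−t})`. -/
theorem stmt7 (d k t : ℕ) (hd : 2 ≤ d) (hk : 2 ≤ k) (ht1 : 1 ≤ t) (ht2 : t ≤ k)
    (Ω σ : Matrix (Fin d) (Fin d) ℂ) (hΩ : Ω.IsHermitian) (hσ : σ.IsHermitian)
    (hcomm : Ω * σ = σ * Ω) (htr : σ.trace = 1) :
    (tensOp (fun m : Fin k => if m.val < t then Ω else 1)
        * (Dk d k * tensOp (fun _ : Fin k => σ) * (Dk d k)ᴴ)).trace
      = (1 / 2 : ℂ) * (Ω * σ).trace ^ t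
        + (1 / 2 : ℂ) * ((Ω * σ) ^ t * σ ^ (k - t)).trace := by
  rw [stmt7_general (by omega) ht2, htr, one_pow, mul_one]
end
end

section
/- Let d ≥ 2, k ≥ 2, 1 ≤ t ≤ k, let ψ, ψ⊥ ∈ ℂ^d be orthonormal vectors, let Ω = |ψ⟩⟨ψ| + λ(I − |ψ⟩⟨ψ|) with λ ∈ [0,1), and let 0 ≤ ε ≤ 1/k. Define φ' = (1/√k) Σ_{m=1}^{k} ψ^{⊗(m−1)} ⊗ ψ⊥ ⊗ ψ^{⊗(k−m)} and φ = √(1−kε)·ψ^{⊗k} + √(kε)·φ'. Then, with S_k the cyclic-shift unitary on (ℂ^d)^{⊗k} and D_k = (I + S_k)/2, one has S_k φ = φ (so D_k |φ⟩⟨φ| D_k† = |φ⟩⟨φ|), and the passing probability satisfies tr[(Ω^{⊗t} ⊗ I^{⊗(k−t)}) · D_k |φ⟩⟨φ| D_k†] = 1 − (1−λ) t ε. -/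
open Matrix Kronecker BigOperators

noncomputable section

/-!
The product vectors carrying `ψ⊥` in exactly one factor are permuted by the cyclic shift, so `φ`, in
which they all have the same amplitude `√ε`, is fixed by `S_k` and hence by `D_k`. The trace is
therefore an expectation value in `φ`. Together with `ψ^{⊗k}` these vectors are orthonormal
eigenvectors of `Ω^{⊗t} ⊗ I^{⊗(k-t)}`: the eigenvalue is `λ` when `ψ⊥` sits in a tested factor and
`1` otherwise. Hence the expectation is `(1 - kε) + ε (tλ + (k - t)) = 1 - (1 - λ) t ε`.
-/

theorem sum_ite_mem_const_one {ι R : Type*} [Fintype ι] [DecidableEq ι] [CommRing R]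
    (T : Finset ι) (c : R) :
    ∑ i, (if i ∈ T then c else 1) = Fintype.card ι - (1 - c) * T.card := by
  have hterm (i : ι) : (if i ∈ T then c else 1) = 1 - if i ∈ T then 1 - c else 0 := by
    split_ifs <;> simp
  rw [Finset.sum_congr rfl fun i _ => hterm i, Finset.sum_sub_distrib, Finset.sum_const,
    Finset.sum_ite_mem, Finset.univ_inter, Finset.sum_const, Finset.card_univ, nsmul_one,
    nsmul_eq_mul, mul_comm]

section PureStates

variable {m n ι R : Type*} [Fintype n] [CommRing R] [StarRing R]

theorem mul_vecMulVec_star_mul_conjTranspose (A : Matrix m n R) (x : n → R) :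
    A * vecMulVec x (star x) * Aᴴ = vecMulVec (A *ᵥ x) (star (A *ᵥ x)) := by
  rw [mul_vecMulVec, vecMulVec_mul, ← star_mulVec]

theorem trace_mul_vecMulVec_star (A : Matrix n n R) (x : n → R) :
    (A * vecMulVec x (star x)).trace = star x ⬝ᵥ A *ᵥ x := by
  rw [mul_vecMulVec, trace_vecMulVec, dotProduct_comm]

theorem star_dotProduct_mulVec_of_orthonormal_eigenvectors [Fintype ι] [DecidableEq ι]
    {A : Matrix n n R} {e : ι → n → R} {c : ι → R}
    (horth : ∀ i j, star (e i) ⬝ᵥ e j = if i = j then 1 else 0)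
    (heig : ∀ i, A *ᵥ e i = c i • e i) (a : ι → R) :
    star (∑ i, a i • e i) ⬝ᵥ A *ᵥ (∑ i, a i • e i) = ∑ i, star (a i) * a i * c i := by
  simp only [star_sum, star_smul, mulVec_sum, mulVec_smul, heig, sum_dotProduct, dotProduct_sum,
    smul_dotProduct, dotProduct_smul, horth, smul_eq_mul, mul_ite, mul_one, mul_zero,
    Finset.sum_ite_eq', Finset.mem_univ, if_true]
  exact Finset.sum_congr rfl fun i _ => by ring

variable [DecidableEq n]

theorem homogeneous_mulVec_self {ψ : n → R} (hψ : star ψ ⬝ᵥ ψ = 1) (c : R) :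
    (vecMulVec ψ (star ψ) + c • (1 - vecMulVec ψ (star ψ))) *ᵥ ψ = ψ := by
  simp [add_mulVec, smul_mulVec, sub_mulVec, vecMulVec_mulVec, hψ]

theorem homogeneous_mulVec_of_orthogonal {ψ x : n → R} (hx : star ψ ⬝ᵥ x = 0) (c : R) :
    (vecMulVec ψ (star ψ) + c • (1 - vecMulVec ψ (star ψ))) *ᵥ x = c • x := by
  simp [add_mulVec, smul_mulVec, sub_mulVec, vecMulVec_mulVec, hx]

end PureStates

section TensorProducts

variable {d k : ℕ}

theorem tensVec_smul (c : Fin k → ℂ) (v : Fin k → Fin d → ℂ) :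
    tensVec (fun i => c i • v i) = (∏ i, c i) • tensVec v := by
  funext f
  exact Finset.prod_mul_distrib

theorem star_tensVec_dotProduct_tensVec (u v : Fin k → Fin d → ℂ) :
    star (tensVec u) ⬝ᵥ tensVec v = ∏ i, star (u i) ⬝ᵥ v i := by
  simp only [dotProduct, tensVec, Pi.star_apply, star_prod, ← Finset.prod_mul_distrib,
    Fintype.prod_sum]

theorem tensOp_mulVec_tensVec (A : Fin k → Matrix (Fin d) (Fin d) ℂ) (v : Fin k → Fin d → ℂ) :
    tensOp A *ᵥ tensVec v = tensVec fun i => A i *ᵥ v i := by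
  funext g
  simp only [mulVec, dotProduct, tensOp, tensVec, ← Finset.prod_mul_distrib, Fintype.prod_sum]

theorem tensOp_mulVec_tensVec_of_eigenvectors {A : Fin k → Matrix (Fin d) (Fin d) ℂ}
    {v : Fin k → Fin d → ℂ} {c : Fin k → ℂ} (h : ∀ i, A i *ᵥ v i = c i • v i) :
    tensOp A *ᵥ tensVec v = (∏ i, c i) • tensVec v := by
  simp only [tensOp_mulVec_tensVec, h, tensVec_smul]

end TensorProducts

section CyclicShift

variable {d k : ℕ}

theorem prevIdx_injective : Function.Injective (prevIdx (k := k)) := by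
  intro i j h
  have hmod : i.val ≡ j.val [MOD k] := Nat.ModEq.add_right_cancel' (k - 1) (congrArg Fin.val h)
  exact Fin.ext (hmod.eq_of_lt_of_lt i.isLt j.isLt)

/-- The cyclic permutation `m ↦ m - 1 (mod k)` of the tensor factors, `prevIdx` as a bijection. -/
def prevPerm (k : ℕ) : Equiv.Perm (Fin k) :=
  Equiv.ofBijective prevIdx (Finite.injective_iff_bijective.mp prevIdx_injective)

theorem cyc_mulVec_apply (x : (Fin k → Fin d) → ℂ) (g : Fin k → Fin d) :
    (cyc d k *ᵥ x) g = x (g ∘ (prevPerm k).symm) := by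
  have hcyc (f : Fin k → Fin d) : cyc d k g f = if g ∘ (prevPerm k).symm = f then 1 else 0 :=
    if_congr (Equiv.comp_symm_eq (prevPerm k) f g).symm rfl rfl
  simp only [mulVec, dotProduct, hcyc, ite_mul, one_mul, zero_mul, Finset.sum_ite_eq,
    Finset.mem_univ, if_true]

theorem cyc_mulVec_tensVec (v : Fin k → Fin d → ℂ) :
    cyc d k *ᵥ tensVec v = tensVec (v ∘ prevPerm k) := by
  funext g
  rw [cyc_mulVec_apply, tensVec, ← Equiv.prod_comp (prevPerm k)]
  simp only [tensVec, Function.comp_apply, Equiv.symm_apply_apply]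

theorem Dk_mulVec_of_cyc_mulVec {x : (Fin k → Fin d) → ℂ} (hx : cyc d k *ᵥ x = x) :
    Dk d k *ᵥ x = x := by
  rw [Dk, smul_mulVec, add_mulVec, one_mulVec, hx, ← two_smul ℂ x, smul_smul]
  norm_num

end CyclicShift

section Excitations

variable {d k : ℕ}

/-- The product vector with `ψp` in the factor singled out by `o` and `ψ` in all the others;
`o = none` stands for the unexcited vector `ψ^{⊗k}`. -/
def excitation (ψ ψp : Fin d → ℂ) (o : Option (Fin k)) : (Fin k → Fin d) → ℂ :=
  tensVec fun i => if o = some i then ψp else ψ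

/-- The superposition of `ψ^{⊗k}` with amplitude `a` and of the `k` singly excited product vectors,
each with the same amplitude `b`. -/
def excitationState (k : ℕ) (ψ ψp : Fin d → ℂ) (a b : ℂ) : (Fin k → Fin d) → ℂ :=
  ∑ o : Option (Fin k), (o.elim a fun _ => b) • excitation ψ ψp o

theorem excitationState_eq (ψ ψp : Fin d → ℂ) (a b : ℂ) :
    excitationState k ψ ψp a b = a • tensVec (fun _ => ψ)
      + b • ∑ m : Fin k, tensVec fun i => if i = m then ψp else ψ := by
  simp [excitationState, excitation, Fintype.sum_option, Finset.smul_sum, eq_comm]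

theorem cyc_mulVec_excitation (ψ ψp : Fin d → ℂ) (o : Option (Fin k)) :
    cyc d k *ᵥ excitation ψ ψp o = excitation ψ ψp (o.map (prevPerm k).symm) := by
  rw [excitation, cyc_mulVec_tensVec, excitation]
  congr 1
  funext i
  cases o <;> simp [Equiv.symm_apply_eq]

theorem cyc_mulVec_excitationState (ψ ψp : Fin d → ℂ) (a b : ℂ) :
    cyc d k *ᵥ excitationState k ψ ψp a b = excitationState k ψ ψp a b := by
  simp only [excitationState, mulVec_sum, mulVec_smul, cyc_mulVec_excitation]
  refine Fintype.sum_equiv (Equiv.optionCongr (prevPerm k).symm) _ _ fun o => ?_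
  cases o <;> rfl

theorem star_excitation_dotProduct_excitation {ψ ψp : Fin d → ℂ} (hψ : star ψ ⬝ᵥ ψ = 1)
    (hψp : star ψp ⬝ᵥ ψp = 1) (horth : star ψ ⬝ᵥ ψp = 0) (o o' : Option (Fin k)) :
    star (excitation ψ ψp o) ⬝ᵥ excitation ψ ψp o' = if o = o' then 1 else 0 := by
  have horth' : star ψp ⬝ᵥ ψ = 0 := by rw [star_dotProduct, horth, star_zero]
  rw [excitation, excitation, star_tensVec_dotProduct_tensVec]
  split_ifs with h
  · subst h
    exact Finset.prod_eq_one fun i _ => by split_ifs <;> assumption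
  · obtain ⟨i, hi⟩ : ∃ i, ¬(o = some i ↔ o' = some i) := by
      by_contra! hall
      exact h (Option.ext hall)
    exact Finset.prod_eq_zero (Finset.mem_univ i) (by split_ifs <;> first | assumption | tauto)

theorem tensOp_mulVec_excitation {ψ ψp : Fin d → ℂ} {Ω : Matrix (Fin d) (Fin d) ℂ} {c : ℂ}
    (hΩψ : Ω *ᵥ ψ = ψ) (hΩψp : Ω *ᵥ ψp = c • ψp) (T : Finset (Fin k)) (o : Option (Fin k)) :
    tensOp (fun i => if i ∈ T then Ω else 1) *ᵥ excitation ψ ψp o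
      = (o.elim 1 fun m => if m ∈ T then c else 1) • excitation ψ ψp o := by
  have hfactor (i : Fin k) : (if i ∈ T then Ω else 1) *ᵥ (if o = some i then ψp else ψ)
      = (if o = some i then if i ∈ T then c else 1 else 1) • if o = some i then ψp else ψ := by
    split_ifs <;> simp [hΩψ, hΩψp]
  rw [excitation, tensOp_mulVec_tensVec_of_eigenvectors hfactor]
  cases o <;> simp

theorem star_excitationState_dotProduct_tensOp_mulVec {ψ ψp : Fin d → ℂ} (hψ : star ψ ⬝ᵥ ψ = 1)
    (hψp : star ψp ⬝ᵥ ψp = 1) (horth : star ψ ⬝ᵥ ψp = 0) {Ω : Matrix (Fin d) (Fin d) ℂ} {c : ℂ}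
    (hΩψ : Ω *ᵥ ψ = ψ) (hΩψp : Ω *ᵥ ψp = c • ψp) (T : Finset (Fin k)) (a b : ℂ) :
    star (excitationState k ψ ψp a b)
        ⬝ᵥ tensOp (fun i => if i ∈ T then Ω else 1) *ᵥ excitationState k ψ ψp a b
      = star a * a + star b * b * (k - (1 - c) * T.card) := by
  rw [excitationState, star_dotProduct_mulVec_of_orthonormal_eigenvectors
    (star_excitation_dotProduct_excitation hψ hψp horth) (tensOp_mulVec_excitation hΩψ hΩψp T),
    Fintype.sum_option]
  simp only [Option.elim_none, Option.elim_some, mul_one, ← Finset.mul_sum, sum_ite_mem_const_one,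
    Fintype.card_fin]

end Excitations

theorem star_ofReal_sqrt_mul_self {x : ℝ} (hx : 0 ≤ x) :
    star ((√x : ℝ) : ℂ) * ((√x : ℝ) : ℂ) = x := by
  rw [Complex.star_def, Complex.conj_ofReal, ← Complex.ofReal_mul, Real.mul_self_sqrt hx]

theorem stmt17_general {d k : ℕ} (hk : 0 < k) (T : Finset (Fin k)) {ψ ψp : Fin d → ℂ}
    (hψ : star ψ ⬝ᵥ ψ = 1) (hψp : star ψp ⬝ᵥ ψp = 1) (horth : star ψ ⬝ᵥ ψp = 0)
    {c : ℂ} {ε : ℝ} (hε0 : 0 ≤ ε) (hε1 : ε ≤ 1 / (k : ℝ)) {Ω : Matrix (Fin d) (Fin d) ℂ}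
    (hΩψ : Ω *ᵥ ψ = ψ) (hΩψp : Ω *ᵥ ψp = c • ψp) {φ' φ : (Fin k → Fin d) → ℂ}
    (hφ' : φ' = ((√k : ℝ) : ℂ)⁻¹ • ∑ m : Fin k, tensVec (fun i => if i = m then ψp else ψ))
    (hφ : φ = ((√(1 - k * ε) : ℝ) : ℂ) • tensVec (fun _ => ψ) + ((√(k * ε) : ℝ) : ℂ) • φ') :
    cyc d k *ᵥ φ = φ ∧
    Dk d k * vecMulVec φ (star φ) * (Dk d k)ᴴ = vecMulVec φ (star φ) ∧
    (tensOp (fun i => if i ∈ T then Ω else 1)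
        * (Dk d k * vecMulVec φ (star φ) * (Dk d k)ᴴ)).trace
      = 1 - (1 - c) * T.card * ε := by
  have hk' : (0 : ℝ) < k := Nat.cast_pos.mpr hk
  have hkε : 0 ≤ 1 - k * ε := sub_nonneg.mpr ((le_div_iff₀' hk').mp hε1)
  have hamp : ((√(k * ε) : ℝ) : ℂ) * ((√k : ℝ) : ℂ)⁻¹ = (√ε : ℝ) := by
    rw [← Complex.ofReal_inv, ← Complex.ofReal_mul, Real.sqrt_mul hk'.le,
      mul_right_comm, mul_inv_cancel₀ (Real.sqrt_ne_zero'.mpr hk'), one_mul]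
  have hstate : φ = excitationState k ψ ψp (√(1 - k * ε) : ℝ) (√ε : ℝ) := by
    rw [excitationState_eq, hφ, hφ', smul_smul, hamp]
  have hS : cyc d k *ᵥ φ = φ := hstate ▸ cyc_mulVec_excitationState ψ ψp _ _
  have hD : Dk d k * vecMulVec φ (star φ) * (Dk d k)ᴴ = vecMulVec φ (star φ) := by
    rw [mul_vecMulVec_star_mul_conjTranspose, Dk_mulVec_of_cyc_mulVec hS]
  refine ⟨hS, hD, ?_⟩
  rw [hD, trace_mul_vecMulVec_star, hstate,
    star_excitationState_dotProduct_tensOp_mulVec hψ hψp horth hΩψ hΩψp,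
    star_ofReal_sqrt_mul_self hkε, star_ofReal_sqrt_mul_self hε0]
  push_cast
  ring

/-- for the worst-case globally controlled state
`φ = √(1−kε)·ψ^{⊗k} + √(kε)·φ'` one has `S_k φ = φ`
(so `D_k |φ⟩⟨φ| D_k† = |φ⟩⟨φ|`), and the passing probability satisfies
`tr[(Ω^{⊗t} ⊗ I^{⊗(k−t)}) · D_k |φ⟩⟨φ| D_k†] = 1 − (1−λ)tε`. -/
theorem stmt17 (d k t : ℕ) (hd : 2 ≤ d) (hk : 2 ≤ k) (ht1 : 1 ≤ t) (ht2 : t ≤ k)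
    (ψ ψp : Fin d → ℂ) (hψ : star ψ ⬝ᵥ ψ = 1) (hψp : star ψp ⬝ᵥ ψp = 1)
    (horth : star ψ ⬝ᵥ ψp = 0)
    (lam ε : ℝ) (hlam0 : 0 ≤ lam) (hlam1 : lam < 1)
    (hε0 : 0 ≤ ε) (hε1 : ε ≤ 1 / (k : ℝ))
    (Ω : Matrix (Fin d) (Fin d) ℂ)
    (hΩ : Ω = vecMulVec ψ (star ψ) + (lam : ℂ) • (1 - vecMulVec ψ (star ψ)))
    (φ' φ : (Fin k → Fin d) → ℂ)
    (hφ' : φ' = (((Real.sqrt k : ℝ) : ℂ))⁻¹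
        • ∑ m : Fin k, tensVec (fun i : Fin k => if i = m then ψp else ψ))
    (hφ : φ = ((Real.sqrt (1 - k * ε) : ℝ) : ℂ) • tensVec (fun _ : Fin k => ψ)
        + ((Real.sqrt (k * ε) : ℝ) : ℂ) • φ') :
    (cyc d k).mulVec φ = φ ∧
    Dk d k * vecMulVec φ (star φ) * (Dk d k)ᴴ = vecMulVec φ (star φ) ∧
    (tensOp (fun m : Fin k => if m.val < t then Ω else 1)
        * (Dk d k * vecMulVec φ (star φ) * (Dk d k)ᴴ)).trace
      = ((1 - (1 - lam) * t * ε : ℝ) : ℂ) := by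
  simpa [Fin.card_filter_val_lt, ht2] using stmt17_general (by lia) {m : Fin k | m.val < t}
    hψ hψp horth hε0 hε1 (hΩ ▸ homogeneous_mulVec_self hψ lam)
    (hΩ ▸ homogeneous_mulVec_of_orthogonal horth lam) hφ' hφ
end
end
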